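/- Let x be a random variable taking values in a finite set X, let V be a finite set, and let z = (z_1, …, z_K) be a random vector taking values in V^K, jointly distributed with x. Fix i ∈ {3, …, K} and suppose z_{i−1} and z_i are conditionally independent given (x, z_{≤i−2}), and that I(z_i; x | z_{≤i−1}) > I(z_{i−1}; x | z_{≤i−2}). Let z' be obtained from z by exchanging coordinates i−1 and i (i.e., z'_{i−1} = z_i, z'_i = z_{i−1}, and z'_k = z_k for all other k). Then Σ_{k=1}^K I(x; z'_{≤k}) > Σ_{k=1}^K I(x; z_{≤k}). -/

import Mathlib

open Finset

/-- A probability mass function on a finite type. -/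
def IsPMF {Ω : Type*} [Fintype Ω] (μ : Ω → ℝ) : Prop :=
  (∀ ω, 0 ≤ μ ω) ∧ ∑ ω, μ ω = 1

/-- The probability that the random variable `f` takes the value `a`. -/
def pr {Ω A : Type*} [Fintype Ω] [DecidableEq A] (μ : Ω → ℝ) (f : Ω → A) (a : A) : ℝ :=
  ∑ ω, if f ω = a then μ ω else 0

/-- Mutual information `I(f; g)`; terms with zero joint probability contribute `0`. -/
noncomputable def mi {Ω A B : Type*} [Fintype Ω] [Fintype A] [Fintype B]
    [DecidableEq A] [DecidableEq B] (μ : Ω → ℝ) (f : Ω → A) (g : Ω → B) : ℝ :=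
  ∑ a : A, ∑ b : B,
    pr μ (fun ω => (f ω, g ω)) (a, b) *
      Real.log (pr μ (fun ω => (f ω, g ω)) (a, b) / (pr μ f a * pr μ g b))

/-- Conditional mutual information `I(f; g | h)`. -/
noncomputable def cmi {Ω A B C : Type*} [Fintype Ω] [Fintype A] [Fintype B] [Fintype C]
    [DecidableEq A] [DecidableEq B] [DecidableEq C]
    (μ : Ω → ℝ) (f : Ω → A) (g : Ω → B) (h : Ω → C) : ℝ :=
  ∑ c : C, ∑ a : A, ∑ b : B,
    pr μ (fun ω => ((f ω, g ω), h ω)) ((a, b), c) *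
      Real.log (pr μ (fun ω => ((f ω, g ω), h ω)) ((a, b), c) * pr μ h c /
        (pr μ (fun ω => (f ω, h ω)) (a, c) * pr μ (fun ω => (g ω, h ω)) (b, c)))

/-- `f` and `g` are conditionally independent given `h`. -/
def CondIndepRV {Ω A B C : Type*} [Fintype Ω] [DecidableEq A] [DecidableEq B] [DecidableEq C]
    (μ : Ω → ℝ) (f : Ω → A) (g : Ω → B) (h : Ω → C) : Prop :=
  ∀ a b c, 0 < pr μ h c →
    pr μ (fun ω => ((f ω, g ω), h ω)) ((a, b), c) * pr μ h c =
      pr μ (fun ω => (f ω, h ω)) (a, c) * pr μ (fun ω => (g ω, h ω)) (b, c)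

/-- Entropy `H(f)`. -/
noncomputable def ent {Ω A : Type*} [Fintype Ω] [Fintype A] [DecidableEq A]
    (μ : Ω → ℝ) (f : Ω → A) : ℝ :=
  -∑ a : A, pr μ f a * Real.log (pr μ f a)

/-- Conditional entropy `H(f | g)`. -/
noncomputable def condEnt {Ω A B : Type*} [Fintype Ω] [Fintype A] [Fintype B]
    [DecidableEq A] [DecidableEq B] (μ : Ω → ℝ) (f : Ω → A) (g : Ω → B) : ℝ :=
  -∑ a : A, ∑ b : B,
    pr μ (fun ω => (f ω, g ω)) (a, b) *
      Real.log (pr μ (fun ω => (f ω, g ω)) (a, b) / pr μ g b)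

/-- The joint pmf of `(x, z)` induced by the data pmf `pd` and the encoder `q`. -/
def joint {X Z : Type*} (pd : X → ℝ) (q : X → Z → ℝ) : X × Z → ℝ :=
  fun ω => pd ω.1 * q ω.1 ω.2

/-- The first `i` coordinates `z_{≤ i}` of a vector `z ∈ V^K`. -/
def trunc {V : Type*} {K : ℕ} (i : ℕ) (h : i ≤ K) (v : Fin K → V) : Fin i → V :=
  fun j => v (Fin.castLE h j)

/-- `- log x` valued in the extended reals, with `- log 0 = ⊤`. -/
noncomputable def negLog (x : ℝ) : EReal := if x = 0 then ⊤ else ((-Real.log x : ℝ) : EReal)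

/-- An encoder is a conditional pmf `q(z | x)`. -/
def IsEncoder {X Z : Type*} [Fintype Z] (q : X → Z → ℝ) : Prop :=
  ∀ a, (∀ v, 0 ≤ q a v) ∧ ∑ v, q a v = 1

/-- A decoder is a family of conditional pmfs `p_i(x | z_{≤ i})`, `i = 1, …, K`. -/
def IsDecoder {X V : Type*} [Fintype X] (K : ℕ) (d : (i : ℕ) → (Fin i → V) → X → ℝ) : Prop :=
  ∀ i, 1 ≤ i → i ≤ K → ∀ zc : Fin i → V, (∀ a, 0 ≤ d i zc a) ∧ ∑ a, d i zc a = 1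

/-- The objective `L(q, {p_i}) = (1/K) ∑_{i=1}^K E[- log p_i(x | z_{≤ i})]`. -/
noncomputable def objL {X V : Type*} [Fintype X] [Fintype V] (K : ℕ)
    (pd : X → ℝ) (q : X → (Fin K → V) → ℝ) (d : (i : ℕ) → (Fin i → V) → X → ℝ) : EReal :=
  ((1 / K : ℝ) : EReal) *
    ∑ i : Fin K, ∑ a : X, ∑ v : Fin K → V,
      ((pd a * q a v : ℝ) : EReal) * negLog (d (i.1 + 1) (trunc (i.1 + 1) i.isLt v) a)

/-- Negative entropy, written as an expectation over the sample space. -/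
noncomputable def negEnt {Ω A : Type*} [Fintype Ω] [DecidableEq A]
    (μ : Ω → ℝ) (f : Ω → A) : ℝ :=
  ∑ ω, μ ω * Real.log (pr μ f (f ω))

lemma negEnt_congr {Ω A B : Type*} [Fintype Ω] [DecidableEq A] [DecidableEq B]
    (μ : Ω → ℝ) (f : Ω → A) (g : Ω → B) (h : ∀ ω ω', f ω = f ω' ↔ g ω = g ω') :
    negEnt μ f = negEnt μ g := by
  unfold negEnt pr
  simp only [h]

lemma sum_pr_mul {Ω A : Type*} [Fintype Ω] [Fintype A] [DecidableEq A]
    (μ : Ω → ℝ) (f : Ω → A) (F : A → ℝ) :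
    ∑ a, pr μ f a * F a = ∑ ω, μ ω * F (f ω) := by
  unfold pr
  simp only [Finset.sum_mul]
  rw [Finset.sum_comm]
  refine Finset.sum_congr rfl fun ω _ => ?_
  simp [ite_mul]

lemma pr_nonneg' {Ω A : Type*} [Fintype Ω] [DecidableEq A]
    (μ : Ω → ℝ) (hμ : ∀ ω, 0 ≤ μ ω) (f : Ω → A) (a : A) : 0 ≤ pr μ f a := by
  unfold pr
  exact Finset.sum_nonneg fun ω _ => by split_ifs <;> simp [hμ ω]

lemma pr_pos' {Ω A : Type*} [Fintype Ω] [DecidableEq A]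
    (μ : Ω → ℝ) (hμ : ∀ ω, 0 ≤ μ ω) (f : Ω → A) (ω : Ω) (h : 0 < μ ω) :
    0 < pr μ f (f ω) := by
  unfold pr
  refine lt_of_lt_of_le h ?_
  have := Finset.single_le_sum (f := fun ω' => if f ω' = f ω then μ ω' else 0)
    (fun ω' _ => by split_ifs <;> simp [hμ ω']) (Finset.mem_univ ω)
  simpa using this

lemma mi_eq {Ω A B : Type*} [Fintype Ω] [Fintype A] [Fintype B]
    [DecidableEq A] [DecidableEq B] (μ : Ω → ℝ) (hμ : ∀ ω, 0 ≤ μ ω) (f : Ω → A) (g : Ω → B) :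
    mi μ f g = negEnt μ (fun ω => (f ω, g ω)) - negEnt μ f - negEnt μ g := by
  unfold mi negEnt
  have := sum_pr_mul μ (fun ω => (f ω, g ω)) (fun p =>
    Real.log (pr μ (fun ω => (f ω, g ω)) p / (pr μ f p.1 * pr μ g p.2)))
  rw [Fintype.sum_prod_type] at this
  dsimp only at this
  rw [this, ← Finset.sum_sub_distrib, ← Finset.sum_sub_distrib]
  refine Finset.sum_congr rfl fun ω _ => ?_
  rcases (hμ ω).eq_or_lt with h | h
  · simp [← h]
  have h1 := pr_pos' μ hμ (fun ω => (f ω, g ω)) ω h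
  have h2 := pr_pos' μ hμ f ω h
  have h3 := pr_pos' μ hμ g ω h
  rw [Real.log_div h1.ne' (by positivity), Real.log_mul h2.ne' h3.ne']
  ring

lemma cmi_eq_sum {Ω A B C : Type*} [Fintype Ω] [Fintype A] [Fintype B] [Fintype C]
    [DecidableEq A] [DecidableEq B] [DecidableEq C]
    (μ : Ω → ℝ) (f : Ω → A) (g : Ω → B) (h : Ω → C) :
    cmi μ f g h = ∑ ω, μ ω * 
      Real.log (pr μ (fun ω => ((f ω, g ω), h ω)) ((f ω, g ω), h ω) * pr μ h (h ω) /
        (pr μ (fun ω => (f ω, h ω)) (f ω, h ω) * pr μ (fun ω => (g ω, h ω)) (g ω, h ω))) := by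
  unfold cmi
  have := sum_pr_mul μ (fun ω => ((f ω, g ω), h ω)) (fun p =>
    Real.log (pr μ (fun ω => ((f ω, g ω), h ω)) p * pr μ h p.2 /
        (pr μ (fun ω => (f ω, h ω)) (p.1.1, p.2) * pr μ (fun ω => (g ω, h ω)) (p.1.2, p.2))))
  rw [Fintype.sum_prod_type_right] at this
  simp only [Fintype.sum_prod_type] at this
  exact this

lemma cmi_eq {Ω A B C : Type*} [Fintype Ω] [Fintype A] [Fintype B] [Fintype C]
    [DecidableEq A] [DecidableEq B] [DecidableEq C]
    (μ : Ω → ℝ) (hμ : ∀ ω, 0 ≤ μ ω) (f : Ω → A) (g : Ω → B) (h : Ω → C) :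
    cmi μ f g h = negEnt μ (fun ω => ((f ω, g ω), h ω)) + negEnt μ h
      - negEnt μ (fun ω => (f ω, h ω)) - negEnt μ (fun ω => (g ω, h ω)) := by
  rw [cmi_eq_sum]
  unfold negEnt
  rw [← Finset.sum_add_distrib, ← Finset.sum_sub_distrib, ← Finset.sum_sub_distrib]
  refine Finset.sum_congr rfl fun ω _ => ?_
  rcases (hμ ω).eq_or_lt with h0 | h0
  · simp [← h0]
  have h1 := pr_pos' μ hμ (fun ω => ((f ω, g ω), h ω)) ω h0
  have h2 := pr_pos' μ hμ h ω h0
  have h3 := pr_pos' μ hμ (fun ω => (f ω, h ω)) ω h0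
  have h4 := pr_pos' μ hμ (fun ω => (g ω, h ω)) ω h0
  rw [Real.log_div (by positivity) (by positivity), Real.log_mul h3.ne' h4.ne',
    Real.log_mul h1.ne' h2.ne']
  ring

lemma cmi_eq_zero {Ω A B C : Type*} [Fintype Ω] [Fintype A] [Fintype B] [Fintype C]
    [DecidableEq A] [DecidableEq B] [DecidableEq C]
    (μ : Ω → ℝ) (hμ : ∀ ω, 0 ≤ μ ω) (f : Ω → A) (g : Ω → B) (h : Ω → C)
    (hci : CondIndepRV μ f g h) : cmi μ f g h = 0 := by
  rw [cmi_eq_sum]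
  refine Finset.sum_eq_zero fun ω _ => ?_
  rcases (hμ ω).eq_or_lt with h0 | h0
  · simp [← h0]
  have h1 := pr_pos' μ hμ (fun ω => ((f ω, g ω), h ω)) ω h0
  have h2 := pr_pos' μ hμ h ω h0
  rw [← hci _ _ _ h2, div_self (by positivity)]
  simp

lemma sum_pr_pair {Ω A C : Type*} [Fintype Ω] [Fintype A]
    [DecidableEq A] [DecidableEq C] (μ : Ω → ℝ) (f : Ω → A) (h : Ω → C) (c : C) :
    ∑ a, pr μ (fun ω => (f ω, h ω)) (a, c) = pr μ h c := by
  unfold pr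
  rw [Finset.sum_comm]
  refine Finset.sum_congr rfl fun ω _ => ?_
  by_cases hc : h ω = c <;> simp [hc]

lemma cmi_nonneg {Ω A B C : Type*} [Fintype Ω] [Fintype A] [Fintype B] [Fintype C]
    [DecidableEq A] [DecidableEq B] [DecidableEq C]
    (μ : Ω → ℝ) (hμ : IsPMF μ) (f : Ω → A) (g : Ω → B) (h : Ω → C) : 0 ≤ cmi μ f g h := by
  have hn := hμ.1
  have key : ∀ c a b,
      pr μ (fun ω => ((f ω, g ω), h ω)) ((a, b), c) -
        pr μ (fun ω => (f ω, h ω)) (a, c) * pr μ (fun ω => (g ω, h ω)) (b, c) / pr μ h c ≤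
      pr μ (fun ω => ((f ω, g ω), h ω)) ((a, b), c) *
      Real.log (pr μ (fun ω => ((f ω, g ω), h ω)) ((a, b), c) * pr μ h c /
        (pr μ (fun ω => (f ω, h ω)) (a, c) * pr μ (fun ω => (g ω, h ω)) (b, c))) := by
    intro c a b
    have p0 := pr_nonneg' μ hn (fun ω => ((f ω, g ω), h ω)) ((a, b), c)
    have q0 := pr_nonneg' μ hn h c
    have r0 := pr_nonneg' μ hn (fun ω => (f ω, h ω)) (a, c)
    have s0 := pr_nonneg' μ hn (fun ω => (g ω, h ω)) (b, c)
    rcases p0.eq_or_lt with p1 | p1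
    · rw [← p1]
      simp only [zero_mul, zero_sub, Left.neg_nonpos_iff]
      positivity
    obtain ⟨ω, hω, hp⟩ : ∃ ω, ((f ω, g ω), h ω) = ((a, b), c) ∧ 0 < μ ω := by
      by_contra! hcon
      refine p1.ne' ?_
      unfold pr
      refine Finset.sum_eq_zero fun ω _ => ?_
      split_ifs with hh
      · exact le_antisymm (hcon ω hh) (hn ω)
      · rfl
    simp only [Prod.mk.injEq] at hω
    obtain ⟨⟨rfl, rfl⟩, rfl⟩ := hω
    have h2 := pr_pos' μ hn h ω hp
    have h3 := pr_pos' μ hn (fun ω => (f ω, h ω)) ω hp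
    have h4 := pr_pos' μ hn (fun ω => (g ω, h ω)) ω hp
    generalize pr μ (fun ω => ((f ω, g ω), h ω)) ((f ω, g ω), h ω) = p at *
    generalize pr μ h (h ω) = q at *
    generalize pr μ (fun ω => (f ω, h ω)) (f ω, h ω) = r at *
    generalize pr μ (fun ω => (g ω, h ω)) (g ω, h ω) = s at *
    have := Real.one_sub_inv_le_log_of_pos (x := p * q / (r * s)) (by positivity)
    have := mul_le_mul_of_nonneg_left this p1.le
    refine le_trans (le_of_eq ?_) this
    field_simp
  have hsum := Finset.sum_le_sum fun c (_ : c ∈ Finset.univ) =>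
    Finset.sum_le_sum fun a (_ : a ∈ Finset.univ) =>
    Finset.sum_le_sum fun b (_ : b ∈ Finset.univ) => key c a b
  refine le_trans (le_of_eq ?_) hsum
  symm
  refine Finset.sum_eq_zero fun c _ => ?_
  simp only [Finset.sum_sub_distrib, ← Finset.sum_div, ← Finset.mul_sum, ← Finset.sum_mul]
  rw [sum_pr_pair, sum_pr_pair, ← Fintype.sum_prod_type'
    (f := fun a b => pr μ (fun ω => ((f ω, g ω), h ω)) ((a, b), c))]
  have := sum_pr_pair μ (fun ω => (f ω, g ω)) h c
  simp only [Prod.mk.eta]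
  rw [this, mul_self_div_self, sub_self]

lemma trunc_eq_iff {V : Type*} {K : ℕ} (m : ℕ) (h : m ≤ K) (v w : Fin K → V) :
    trunc m h v = trunc m h w ↔ ∀ j : Fin K, (j : ℕ) < m → v j = w j := by
  constructor
  · intro e j hj
    exact congrFun e ⟨j, hj⟩
  · intro e
    funext j
    exact e _ j.2

lemma mi_congr_right {Ω A B C : Type*} [Fintype Ω] [Fintype A] [Fintype B] [Fintype C]
    [DecidableEq A] [DecidableEq B] [DecidableEq C] (μ : Ω → ℝ) (hμ : ∀ ω, 0 ≤ μ ω)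
    (f : Ω → A) (g : Ω → B) (g' : Ω → C) (h : ∀ ω ω', g ω = g ω' ↔ g' ω = g' ω') :
    mi μ f g = mi μ f g' := by
  rw [mi_eq μ hμ, mi_eq μ hμ, negEnt_congr μ g g' h,
    negEnt_congr μ (fun ω => (f ω, g ω)) (fun ω => (f ω, g' ω)) (by simp [h])]

lemma core_ineq {Ω X A B W W' : Type*} [Fintype Ω] [Fintype X] [Fintype A] [Fintype B]
    [Fintype W] [Fintype W'] [DecidableEq X] [DecidableEq A] [DecidableEq B] [DecidableEq W]
    [DecidableEq W'] (μ : Ω → ℝ) (hμ : IsPMF μ) (x : Ω → X) (a : Ω → A) (b : Ω → B)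
    (w : Ω → W) (w' : Ω → W')
    (hw : ∀ ω ω', w' ω = w' ω' ↔ (w ω, a ω) = (w ω', a ω'))
    (hci : CondIndepRV μ a b (fun ω => (x ω, w ω)))
    (hgt : cmi μ a x w < cmi μ b x w') :
    mi μ x (fun ω => (w ω, a ω)) < mi μ x (fun ω => (w ω, b ω)) := by
  have hn := hμ.1
  have e0 := cmi_eq_zero μ hn _ _ _ hci
  have e1 := cmi_nonneg μ hμ a b w
  rw [cmi_eq μ hn] at e0 e1 hgt
  rw [cmi_eq μ hn] at hgt
  rw [mi_eq μ hn, mi_eq μ hn]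
  simp only [Prod.mk.injEq] at hw
  have c1 : negEnt μ (fun ω => ((b ω, x ω), w' ω)) =
      negEnt μ (fun ω => ((a ω, b ω), (x ω, w ω))) :=
    negEnt_congr _ _ _ (by simp only [Prod.mk.injEq, hw]; tauto)
  have c2 : negEnt μ w' = negEnt μ (fun ω => (a ω, w ω)) :=
    negEnt_congr _ _ _ (by simp only [Prod.mk.injEq, hw]; tauto)
  have c3 : negEnt μ (fun ω => (b ω, w' ω)) = negEnt μ (fun ω => ((a ω, b ω), w ω)) :=
    negEnt_congr _ _ _ (by simp only [Prod.mk.injEq, hw]; tauto)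
  have c4 : negEnt μ (fun ω => (x ω, w' ω)) = negEnt μ (fun ω => ((a ω, x ω), w ω)) :=
    negEnt_congr _ _ _ (by simp only [Prod.mk.injEq, hw]; tauto)
  have c5 : negEnt μ (fun ω => (x ω, (w ω, a ω))) = negEnt μ (fun ω => ((a ω, x ω), w ω)) :=
    negEnt_congr _ _ _ (by simp only [Prod.mk.injEq]; tauto)
  have c6 : negEnt μ (fun ω => (w ω, a ω)) = negEnt μ (fun ω => (a ω, w ω)) :=
    negEnt_congr _ _ _ (by simp only [Prod.mk.injEq]; tauto)
  have c7 : negEnt μ (fun ω => (w ω, b ω)) = negEnt μ (fun ω => (b ω, w ω)) :=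
    negEnt_congr _ _ _ (by simp only [Prod.mk.injEq]; tauto)
  have c8 : negEnt μ (fun ω => (x ω, (w ω, b ω))) = negEnt μ (fun ω => (b ω, (x ω, w ω))) :=
    negEnt_congr _ _ _ (by simp only [Prod.mk.injEq]; tauto)
  have c9 : negEnt μ (fun ω => (a ω, (x ω, w ω))) = negEnt μ (fun ω => ((a ω, x ω), w ω)) :=
    negEnt_congr _ _ _ (by simp only [Prod.mk.injEq]; tauto)
  linarith

/-- Fix `i ∈ {3, …, K}`. If `z_{i-1} ⊥ z_i ∣ (x, z_{≤ i-2})` and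
`I(z_i; x ∣ z_{≤ i-1}) > I(z_{i-1}; x ∣ z_{≤ i-2})`, then exchanging coordinates `i-1` and `i`
strictly increases `∑_{k=1}^K I(x; z_{≤ k})`. (Coordinates are 1-indexed, so coordinate `i`
is the entry of index `i - 1` of a `Fin K`-indexed vector.) -/
theorem swap_increases_information_sum
    {Ω X V : Type*} [Fintype Ω] [Fintype X] [Fintype V] [DecidableEq X] [DecidableEq V]
    (K : ℕ) (μ : Ω → ℝ) (hμ : IsPMF μ)
    (x : Ω → X) (z : Ω → (Fin K → V))
    (i : ℕ) (h3 : 3 ≤ i) (hiK : i ≤ K)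
    (hci : CondIndepRV μ
      (fun ω => z ω (⟨i - 2, by omega⟩ : Fin K))
      (fun ω => z ω (⟨i - 1, by omega⟩ : Fin K))
      (fun ω => (x ω, trunc (i - 2) (by omega) (z ω))))
    (hgt : cmi μ (fun ω => z ω (⟨i - 2, by omega⟩ : Fin K)) x
        (fun ω => trunc (i - 2) (by omega) (z ω)) <
      cmi μ (fun ω => z ω (⟨i - 1, by omega⟩ : Fin K)) x
        (fun ω => trunc (i - 1) (by omega) (z ω)))
    (z' : Ω → (Fin K → V))
    (hz' : ∀ ω (k : Fin K), z' ω k =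
      if (k : ℕ) = i - 2 then z ω (⟨i - 1, by omega⟩ : Fin K)
      else if (k : ℕ) = i - 1 then z ω (⟨i - 2, by omega⟩ : Fin K)
      else z ω k) :
    ∑ k : Fin K, mi μ x (fun ω => trunc (k.1 + 1) k.isLt (z ω)) <
      ∑ k : Fin K, mi μ x (fun ω => trunc (k.1 + 1) k.isLt (z' ω)) := by
  have hn := hμ.1
  have hA : ∀ ω, z' ω (⟨i - 2, by omega⟩ : Fin K) = z ω (⟨i - 1, by omega⟩ : Fin K) := by
    intro ω; rw [hz']; simp
  have hB : ∀ ω, z' ω (⟨i - 1, by omega⟩ : Fin K) = z ω (⟨i - 2, by omega⟩ : Fin K) := by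
    intro ω; rw [hz', if_neg (by dsimp only; omega)]; simp
  have hC : ∀ ω (k : Fin K), (k : ℕ) ≠ i - 2 → (k : ℕ) ≠ i - 1 → z' ω k = z ω k := by
    intro ω k h1 h2; rw [hz', if_neg h1, if_neg h2]
  -- splitting off the last coordinate of a prefix of length `i - 1`
  have hsplit : ∀ (m : ℕ) (hm : m ≤ K), m = i - 1 → ∀ u v : Fin K → V,
      (trunc m hm u = trunc m hm v ↔
      (trunc (i - 2) (by omega) u, u (⟨i - 2, by omega⟩ : Fin K)) =
      (trunc (i - 2) (by omega) v, v (⟨i - 2, by omega⟩ : Fin K))) := by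
    intro m hm hmi u v
    rw [Prod.mk.injEq, trunc_eq_iff, trunc_eq_iff]
    constructor
    · intro e
      exact ⟨fun j hj => e j (by omega), e _ (by dsimp only; omega)⟩
    · rintro ⟨e1, e2⟩ j hj
      by_cases hj2 : (j : ℕ) = i - 2
      · have : j = ⟨i - 2, by omega⟩ := Fin.ext hj2
        rw [this]; exact e2
      · exact e1 j (by omega)
  have hpre : ∀ ω, trunc (i - 2) (by omega) (z' ω) = trunc (i - 2) (by omega) (z ω) := by
    intro ω
    rw [trunc_eq_iff]
    intro j hj
    exact hC ω j (by omega) (by omega)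
  have hcore := core_ineq μ hμ x _ _ _ _ (fun ω ω' => hsplit (i - 1) (by omega) rfl (z ω) (z ω'))
    hci hgt
  have hmain : ∀ k : Fin K, (k : ℕ) = i - 2 →
      mi μ x (fun ω => trunc (k.1 + 1) k.isLt (z ω)) <
      mi μ x (fun ω => trunc (k.1 + 1) k.isLt (z' ω)) := by
    intro k hk
    rw [mi_congr_right μ hn x (fun ω => trunc (k.1 + 1) k.isLt (z ω)) _
        (fun ω ω' => hsplit (k.1 + 1) k.isLt (by omega) (z ω) (z ω')),
      mi_congr_right μ hn x (fun ω => trunc (k.1 + 1) k.isLt (z' ω)) _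
        (fun ω ω' => hsplit (k.1 + 1) k.isLt (by omega) (z' ω) (z' ω'))]
    simp only [hpre, hA]
    exact hcore
  have hother : ∀ k : Fin K, (k : ℕ) ≠ i - 2 →
      mi μ x (fun ω => trunc (k.1 + 1) k.isLt (z ω)) =
      mi μ x (fun ω => trunc (k.1 + 1) k.isLt (z' ω)) := by
    intro k hk
    refine mi_congr_right μ hn x _ _ fun ω ω' => ?_
    rw [trunc_eq_iff, trunc_eq_iff]
    constructor
    · intro e j hj
      by_cases j1 : (j : ℕ) = i - 2
      · have : j = ⟨i - 2, by omega⟩ := Fin.ext j1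
        rw [this, hA, hA]
        exact e _ (by dsimp only; omega)
      by_cases j2 : (j : ℕ) = i - 1
      · have : j = ⟨i - 1, by omega⟩ := Fin.ext j2
        rw [this, hB, hB]
        exact e _ (by dsimp only; omega)
      rw [hC _ j j1 j2, hC _ j j1 j2]
      exact e j hj
    · intro e j hj
      by_cases j1 : (j : ℕ) = i - 2
      · have : j = ⟨i - 2, by omega⟩ := Fin.ext j1
        rw [this, ← hB, ← hB]
        exact e _ (by dsimp only; omega)
      by_cases j2 : (j : ℕ) = i - 1
      · have : j = ⟨i - 1, by omega⟩ := Fin.ext j2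
        rw [this, ← hA, ← hA]
        exact e _ (by dsimp only; omega)
      rw [← hC _ j j1 j2, ← hC _ j j1 j2]
      exact e j hj
  refine Finset.sum_lt_sum (fun k _ => ?_)
    ⟨⟨i - 2, by omega⟩, Finset.mem_univ _, hmain _ rfl⟩
  by_cases hk : (k : ℕ) = i - 2
  · exact (hmain k hk).le
  · exact (hother k hk).le
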